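/- Let a, b, c be complex numbers such that (a+b+1)/2 is not a nonpositive integer, 2c+1 is not a nonpositive integer, and Re(2c − a − b) > −2. Then ₃F₂(a, b, c; (a+b+1)/2, 2c+2; 1) = ₃F₂(a, b, c; (a+b+1)/2, 2c+1; 1) − (2abc/((2c+1)(2c+2)(a+b+1))) · ₃F₂(a+1, b+1, c+1; (a+b+3)/2, 2c+3; 1). -/

import Mathlib

open scoped Nat

/-- The generalized hypergeometric series `₃F₂(a, b, c; d, e; 1)`, defined as
`∑ₙ (a)ₙ(b)ₙ(c)ₙ / ((d)ₙ(e)ₙ n!)` where `(α)ₙ` is the Pochhammer symbol. -/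
noncomputable def hyp3F2 (a b c d e : ℂ) : ℂ :=
  ∑' n : ℕ,
    ((ascPochhammer ℂ n).eval a * (ascPochhammer ℂ n).eval b * (ascPochhammer ℂ n).eval c) /
      ((ascPochhammer ℂ n).eval d * (ascPochhammer ℂ n).eval e * (n ! : ℂ))

/-!
The difference of the terms of index `n + 1` of `₃F₂(a, b, c; d, e; 1)` and
`₃F₂(a, b, c; d, e + 1; 1)` is governed by
`1 / (e)ₙ₊₁ - 1 / (e + 1)ₙ₊₁ = (n + 1) / (e (e + 1) (e + 2)ₙ)`. The factor `n + 1` cancels against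
`(n + 1)!`, and what is left is, up to a constant, the term of index `n` of the series with
parameters `a + 1, b + 1, c + 1; d + 1, e + 2`. Summing is legitimate because Euler's limit
`(a)ₙ₊₁ / (n ^ a n!) → 1 / Γ(a)` shows that the terms are `O(n ^ (-s - 1))`, where
`s = Re (d + e - a - b - c)`.
-/

open Filter Asymptotics Topology

section Pochhammer

lemma ascPochhammer_eval_eq_prod_range {R : Type*} [CommSemiring R] (n : ℕ) (r : R) :
    (ascPochhammer R n).eval r = ∏ j ∈ Finset.range n, (r + j) := by
  induction n with
  | zero => simp
  | succ n ih => rw [ascPochhammer_succ_eval, ih, Finset.prod_range_succ]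

lemma ascPochhammer_succ_eval_left {R : Type*} [CommSemiring R] (n : ℕ) (r : R) :
    (ascPochhammer R (n + 1)).eval r = r * (ascPochhammer R n).eval (r + 1) := by
  simp [ascPochhammer_succ_left]

lemma ascPochhammer_eval_ne_zero {R : Type*} [Ring R] [IsDomain R] {r : R}
    (hr : ∀ m : ℕ, r ≠ -(m : R)) (n : ℕ) : (ascPochhammer R n).eval r ≠ 0 := by
  rw [Ne, ascPochhammer_eval_eq_zero_iff]
  rintro ⟨k, -, hk⟩
  exact hr k (neg_eq_iff_eq_neg.mp hk.symm)

lemma add_one_ne_neg_natCast {R : Type*} [Ring R] {r : R} (hr : ∀ m : ℕ, r ≠ -(m : R)) (m : ℕ) :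
    r + 1 ≠ -(m : R) := by
  intro h
  apply hr (m + 1)
  rw [eq_sub_of_add_eq h, Nat.cast_add_one, neg_add']

lemma inv_ascPochhammer_succ_eval_sub {K : Type*} [Field K] {e : K}
    (he : ∀ m : ℕ, e ≠ -(m : K)) (n : ℕ) :
    ((ascPochhammer K (n + 1)).eval e)⁻¹ - ((ascPochhammer K (n + 1)).eval (e + 1))⁻¹ =
      (n + 1) / (e * (e + 1) * (ascPochhammer K n).eval (e + 2)) := by
  have he₀ : e ≠ 0 := by simpa using he 0
  have h_tail : (ascPochhammer K n).eval (e + 1) ≠ 0 :=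
    ascPochhammer_eval_ne_zero (add_one_ne_neg_natCast he) n
  have h_last : e + 1 + n ≠ 0 := fun h ↦
    add_one_ne_neg_natCast he n (eq_neg_of_add_eq_zero_left h)
  have h_shift : (e + 1) * (ascPochhammer K n).eval (e + 2) =
      (ascPochhammer K n).eval (e + 1) * (e + 1 + n) := by
    rw [← ascPochhammer_succ_eval, ascPochhammer_succ_eval_left, add_assoc, one_add_one_eq_two]
  rw [mul_assoc, h_shift, ascPochhammer_succ_eval_left, ascPochhammer_succ_eval]
  field_simp
  ring

end Pochhammer

section Asymptotics

lemma natCast_cpow_mul_factorial_isTheta (a : ℂ) :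
    (fun n : ℕ ↦ (n : ℂ) ^ a * (n ! : ℂ)) =Θ[atTop] fun n : ℕ ↦ (n : ℝ) ^ a.re * (n ! : ℝ) := by
  refine IsTheta.of_norm_eventuallyEq ?_
  filter_upwards [eventually_gt_atTop 0] with n hn
  rw [norm_mul, Complex.norm_natCast_cpow_of_pos hn, Complex.norm_natCast]

lemma tendsto_ascPochhammer_succ_eval_div (a : ℂ) :
    Tendsto (fun n : ℕ ↦ (ascPochhammer ℂ (n + 1)).eval a / ((n : ℂ) ^ a * (n ! : ℂ))) atTop
      (𝓝 (Complex.Gamma a)⁻¹) := by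
  by_cases ha : ∃ m : ℕ, a = -m
  · -- Mathlib sets `Γ` to `0` at its poles, which agrees here with the zeros of the entire `1 / Γ`.
    rw [(Complex.Gamma_eq_zero_iff a).mpr ha, inv_zero]
    obtain ⟨m, rfl⟩ := ha
    refine tendsto_const_nhds.congr' ?_
    filter_upwards [eventually_ge_atTop m] with n hn
    rw [ascPochhammer_eval_neg_coe_nat_of_lt (Nat.lt_succ_of_le hn), zero_div]
  · push Not at ha
    refine ((Complex.GammaSeq_tendsto_Gamma a).inv₀ (Complex.Gamma_ne_zero ha)).congr fun n ↦ ?_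
    rw [Complex.GammaSeq, inv_div, ascPochhammer_eval_eq_prod_range]

lemma ascPochhammer_succ_eval_isBigO (a : ℂ) :
    (fun n : ℕ ↦ (ascPochhammer ℂ (n + 1)).eval a) =O[atTop]
      fun n : ℕ ↦ (n : ℝ) ^ a.re * (n ! : ℝ) := by
  refine (isBigO_of_div_tendsto_nhds ?_ _ (tendsto_ascPochhammer_succ_eval_div a)).trans_isTheta
    (natCast_cpow_mul_factorial_isTheta a)
  filter_upwards [eventually_ne_atTop 0] with n hn h
  simp [Complex.cpow_eq_zero_iff, hn, Nat.factorial_ne_zero] at h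

lemma ascPochhammer_succ_eval_isTheta {d : ℂ} (hd : ∀ m : ℕ, d ≠ -(m : ℂ)) :
    (fun n : ℕ ↦ (ascPochhammer ℂ (n + 1)).eval d) =Θ[atTop]
      fun n : ℕ ↦ (n : ℝ) ^ d.re * (n ! : ℝ) :=
  (isTheta_of_div_tendsto_nhds_ne_zero (tendsto_ascPochhammer_succ_eval_div d)
    (inv_ne_zero (Complex.Gamma_ne_zero hd))).symm.trans (natCast_cpow_mul_factorial_isTheta d)

end Asymptotics

/-- The `n`-th term of the series `₃F₂(a, b, c; d, e; 1)`, that is, the summand of `hyp3F2`. -/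
noncomputable def hyp3F2Term (a b c d e : ℂ) (n : ℕ) : ℂ :=
  ((ascPochhammer ℂ n).eval a * (ascPochhammer ℂ n).eval b * (ascPochhammer ℂ n).eval c) /
    ((ascPochhammer ℂ n).eval d * (ascPochhammer ℂ n).eval e * (n ! : ℂ))

section HypergeometricSeries

variable (a b c : ℂ) {d e : ℂ}

lemma hyp3F2Term_succ_isBigO (hd : ∀ m : ℕ, d ≠ -(m : ℂ)) (he : ∀ m : ℕ, e ≠ -(m : ℂ)) :
    (fun n ↦ hyp3F2Term a b c d e (n + 1)) =O[atTop]
      fun n : ℕ ↦ (n : ℝ) ^ (-(d + e - a - b - c).re - 1) := by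
  have h_fact : (fun n : ℕ ↦ ((n + 1)! : ℂ)) =Θ[atTop]
      fun n : ℕ ↦ (n : ℝ) ^ (1 : ℝ) * (n ! : ℝ) := by
    simpa only [ascPochhammer_eval_one, Complex.one_re] using
      ascPochhammer_succ_eval_isTheta (d := 1) fun m h ↦
        Nat.cast_add_one_ne_zero m (by linear_combination h)
  have h_num := ((ascPochhammer_succ_eval_isBigO a).mul (ascPochhammer_succ_eval_isBigO b)).mul
    (ascPochhammer_succ_eval_isBigO c)
  have h_den := ((ascPochhammer_succ_eval_isTheta hd).mul (ascPochhammer_succ_eval_isTheta he)).mul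
    h_fact
  refine (h_num.mul h_den.inv.isBigO).congr' (.of_forall fun n ↦ (div_eq_mul_inv _ _).symm) ?_
  filter_upwards [eventually_gt_atTop 0] with n hn
  have hn' : (0 : ℝ) < n := Nat.cast_pos.mpr hn
  have h_exp : -(d + e - a - b - c).re - 1 = a.re + b.re + c.re - (d.re + e.re + 1) := by
    simp only [Complex.sub_re, Complex.add_re]
    ring
  rw [h_exp, Real.rpow_sub hn']
  simp only [Real.rpow_add hn']
  field_simp

lemma summable_hyp3F2Term (hd : ∀ m : ℕ, d ≠ -(m : ℂ)) (he : ∀ m : ℕ, e ≠ -(m : ℂ))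
    (hs : 0 < (d + e - a - b - c).re) : Summable (hyp3F2Term a b c d e) := by
  rw [← summable_nat_add_iff 1]
  exact summable_of_isBigO_nat (Real.summable_nat_rpow.mpr (by linarith))
    (hyp3F2Term_succ_isBigO a b c hd he)

variable (d) in
lemma hyp3F2Term_succ_sub (he : ∀ m : ℕ, e ≠ -(m : ℂ)) (n : ℕ) :
    hyp3F2Term a b c d e (n + 1) - hyp3F2Term a b c d (e + 1) (n + 1) =
      a * b * c / (d * e * (e + 1)) *
        hyp3F2Term (a + 1) (b + 1) (c + 1) (d + 1) (e + 2) n := by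
  have hn : (n : ℂ) + 1 ≠ 0 := Nat.cast_add_one_ne_zero n
  let common : ℂ := (ascPochhammer ℂ (n + 1)).eval a * (ascPochhammer ℂ (n + 1)).eval b *
    (ascPochhammer ℂ (n + 1)).eval c / ((ascPochhammer ℂ (n + 1)).eval d * ((n + 1)! : ℂ))
  calc
    _ = common * (((ascPochhammer ℂ (n + 1)).eval e)⁻¹ -
          ((ascPochhammer ℂ (n + 1)).eval (e + 1))⁻¹) := by
      simp only [hyp3F2Term, common]
      ring
    _ = common * ((n + 1) / (e * (e + 1) * (ascPochhammer ℂ n).eval (e + 2))) := by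
      rw [inv_ascPochhammer_succ_eval_sub he]
    _ = _ := by
      simp only [common, hyp3F2Term, ascPochhammer_succ_eval_left, Nat.factorial_succ, Nat.cast_mul,
        Nat.cast_add_one, div_mul_div_comm]
      refine Eq.trans ?_ (mul_div_mul_right _ _ hn)
      congr 1 <;> ring

end HypergeometricSeries

theorem watson_contiguous_12_general (a b c d e : ℂ)
    (hd : ∀ m : ℕ, d ≠ -(m : ℂ)) (he : ∀ m : ℕ, e ≠ -(m : ℂ))
    (hs : 0 < (d + e - a - b - c).re) :
    hyp3F2 a b c d (e + 1) =
      hyp3F2 a b c d e -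
        a * b * c / (d * e * (e + 1)) *
          hyp3F2 (a + 1) (b + 1) (c + 1) (d + 1) (e + 2) := by
  have h_sum : Summable (hyp3F2Term a b c d e) := summable_hyp3F2Term a b c hd he hs
  have h_sum' : Summable (hyp3F2Term a b c d (e + 1)) := by
    refine summable_hyp3F2Term a b c hd (add_one_ne_neg_natCast he) ?_
    simp only [Complex.sub_re, Complex.add_re, Complex.one_re] at hs ⊢
    linarith
  have h_zero : hyp3F2Term a b c d e 0 - hyp3F2Term a b c d (e + 1) 0 = 0 := by
    simp [hyp3F2Term]
  rw [eq_sub_iff_add_eq, ← eq_sub_iff_add_eq']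
  symm
  calc
    hyp3F2 a b c d e - hyp3F2 a b c d (e + 1)
      = ∑' n, (hyp3F2Term a b c d e n - hyp3F2Term a b c d (e + 1) n) :=
        (h_sum.tsum_sub h_sum').symm
    _ = ∑' n, (hyp3F2Term a b c d e (n + 1) - hyp3F2Term a b c d (e + 1) (n + 1)) := by
        rw [(h_sum.sub h_sum').tsum_eq_zero_add, h_zero, zero_add]
    _ = ∑' n, a * b * c / (d * e * (e + 1)) *
          hyp3F2Term (a + 1) (b + 1) (c + 1) (d + 1) (e + 2) n :=
        tsum_congr (hyp3F2Term_succ_sub a b c d he)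
    _ = _ := tsum_mul_left

theorem watson_contiguous_12 (a b c : ℂ)
    (hd : ∀ m : ℕ, (a + b + 1) / 2 ≠ -(m : ℂ))
    (he : ∀ m : ℕ, 2 * c + 1 ≠ -(m : ℂ))
    (hre : (2 * c - a - b).re > -2) :
    hyp3F2 a b c ((a + b + 1) / 2) (2 * c + 2) =
      hyp3F2 a b c ((a + b + 1) / 2) (2 * c + 1) -
        2 * a * b * c / ((2 * c + 1) * (2 * c + 2) * (a + b + 1)) *
          hyp3F2 (a + 1) (b + 1) (c + 1) ((a + b + 3) / 2) (2 * c + 3) := by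
  have hs : 0 < ((a + b + 1) / 2 + (2 * c + 1) - a - b - c).re := by
    rw [show (a + b + 1) / 2 + (2 * c + 1) - a - b - c = (2 * c - a - b + 3) / 2 by ring,
      Complex.div_ofNat_re, Complex.add_re, Complex.re_ofNat]
    linarith
  have h_coeff : 2 * a * b * c / ((2 * c + 1) * (2 * c + 2) * (a + b + 1)) =
      a * b * c / ((a + b + 1) / 2 * (2 * c + 1) * (2 * c + 2)) := by
    rw [show (a + b + 1) / 2 * (2 * c + 1) * (2 * c + 2) =
      (2 * c + 1) * (2 * c + 2) * (a + b + 1) / 2 by ring, div_div_eq_mul_div]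
    ring
  have h_d : (a + b + 1) / 2 + 1 = (a + b + 3) / 2 := by ring
  have h_e₁ : 2 * c + 1 + 1 = 2 * c + 2 := by ring
  have h_e₂ : 2 * c + 1 + 2 = 2 * c + 3 := by ring
  simpa only [h_coeff, h_d, h_e₁, h_e₂] using watson_contiguous_12_general a b c _ _ hd he hs
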